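/- arXiv:2510.18681 — 7 statements merged into one kernel-verified Lean document; each statement's English description precedes it below -/
import Mathlib

section
/- Let k ∈ [0,1] and define f(x) = (x^(2−k) − x^k)/(x² − 1) + k − 1 for x > 1. Then f(x) ≤ 0 for all x ∈ (1, ∞). Moreover, if k ∈ (0,1), then f(x) < 0 for all x ∈ (1, ∞). -/
/-!
Put `x = exp t` with `t > 0`, and `a = 1 - k`. Since `x ^ (2 - k) - x ^ k = 2 x sinh (a t)` and
`x ^ 2 - 1 = 2 x sinh t`, the claim `f x < 0` says `sinh (a t) < a sinh t`, which for `0 < a < 1`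
is strict convexity of `sinh` on `[0, ∞)` together with `sinh 0 = 0`. At the endpoints
`k = 0, 1` the function `f` vanishes identically.
-/

/-- Proved by monotonicity in `t` of `a sinh t - sinh (a t)`, whose derivative is
`a (cosh t - cosh (a t))`. -/
lemma sinh_mul_lt_mul_sinh {a t : ℝ} (ha0 : 0 < a) (ha1 : a < 1) (ht : 0 < t) :
    Real.sinh (a * t) < a * Real.sinh t := by
  have hd : ∀ s : ℝ, HasDerivAt (fun s => a * Real.sinh s - Real.sinh (a * s))
      (a * Real.cosh s - Real.cosh (a * s) * a) s := fun s =>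
    ((Real.hasDerivAt_sinh s).const_mul a).sub
      (by simpa using ((hasDerivAt_id s).const_mul a).sinh)
  have hmono : StrictMonoOn (fun s => a * Real.sinh s - Real.sinh (a * s)) (Set.Ici 0) := by
    refine strictMonoOn_of_deriv_pos (convex_Ici 0)
      (fun s _ => (hd s).continuousAt.continuousWithinAt) fun s hs => ?_
    rw [interior_Ici, Set.mem_Ioi] at hs
    rw [(hd s).deriv]
    have hc : Real.cosh (a * s) < Real.cosh s := by
      rw [Real.cosh_lt_cosh, abs_of_pos (mul_pos ha0 hs), abs_of_pos hs]
      nlinarith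
    nlinarith
  have h := hmono (Set.mem_Ici.2 le_rfl) (Set.mem_Ici.2 ht.le) ht
  simp only [mul_zero, Real.sinh_zero, sub_zero] at h
  linarith

lemma rpow_quotient_lt_zero {k x : ℝ} (hk : k ∈ Set.Ioo (0 : ℝ) 1) (hx : 1 < x) :
    (x ^ (2 - k) - x ^ k) / (x ^ 2 - 1) + k - 1 < 0 := by
  obtain ⟨t, rfl⟩ : ∃ t, x = Real.exp t := ⟨Real.log x, (Real.exp_log (by linarith)).symm⟩
  have ht : 0 < t := Real.one_lt_exp_iff.1 hx
  have h := sinh_mul_lt_mul_sinh (a := 1 - k) (by linarith [hk.2]) (by linarith [hk.1]) ht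
  have hnum : Real.exp t ^ (2 - k) - Real.exp t ^ k
      = 2 * Real.exp t * Real.sinh ((1 - k) * t) := by
    rw [← Real.exp_mul, ← Real.exp_mul, Real.sinh_eq,
      show t * (2 - k) = t + (1 - k) * t by ring, show t * k = t + -((1 - k) * t) by ring,
      Real.exp_add, Real.exp_add]
    ring
  have hden : Real.exp t ^ 2 - 1 = 2 * Real.exp t * Real.sinh t := by
    have he : Real.exp t * Real.exp (-t) = 1 := by rw [← Real.exp_add]; simp
    rw [Real.sinh_eq]
    linear_combination he
  have hs : 0 < Real.sinh t := Real.sinh_pos_iff.2 ht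
  rw [hnum, hden, mul_div_mul_left _ _ (by positivity)]
  have := (div_lt_iff₀ hs).2 h
  linarith

/-- For `k ∈ [0,1]` and `f x = (x^(2-k) - x^k)/(x^2 - 1) + k - 1`,
`f x ≤ 0` for all `x ∈ (1,∞)`, and `f x < 0` there if `k ∈ (0,1)`. -/
theorem generalized_sci_calc_lemma0 (k : ℝ) (hk : k ∈ Set.Icc (0 : ℝ) 1) :
    (∀ x : ℝ, 1 < x → (x ^ (2 - k) - x ^ k) / (x ^ 2 - 1) + k - 1 ≤ 0) ∧
    (k ∈ Set.Ioo (0 : ℝ) 1 →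
      ∀ x : ℝ, 1 < x → (x ^ (2 - k) - x ^ k) / (x ^ 2 - 1) + k - 1 < 0) := by
  refine ⟨fun x hx => ?_, fun hk' x hx => rpow_quotient_lt_zero hk' hx⟩
  rcases hk.1.eq_or_lt with rfl | h0
  · have hne : x ^ 2 - 1 ≠ 0 := by nlinarith
    simp [div_self hne]
  rcases hk.2.eq_or_lt with rfl | h1
  · norm_num
  · exact (rpow_quotient_lt_zero ⟨h0, h1⟩ hx).le
end

section
/- Let k ∈ (0,1) and define f₁(x) = −k·x^(2−k) + (2−k)·x^k − (2−k)·x^(−k) + k·x^(k−2) for x > 1. Then f₁(x) < 0 for all x ∈ (1, ∞). -/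
/-!
With `x = exp t`, `t > 0`, the expression equals
`2 * ((2 - k) * sinh (k * t) - k * sinh ((2 - k) * t))`. Since `0 < k < 2 - k`, its negativity
is the inequality `b * sinh (a * t) < a * sinh (b * t)` for `0 < a < b`. This holds because the
difference of the two sides vanishes at `t = 0` and has derivative
`a * b * (cosh (b * t) - cosh (a * t)) > 0`.
-/

/-- The strict monotonicity of `c ↦ sinh (c * t) / c` on positive reals, without the division. -/
lemma mul_sinh_mul_lt {a b t : ℝ} (ha : 0 < a) (hab : a < b) (ht : 0 < t) :
    b * Real.sinh (a * t) < a * Real.sinh (b * t) := by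
  have hd : ∀ s : ℝ, HasDerivAt (fun s => a * Real.sinh (b * s) - b * Real.sinh (a * s))
      (a * (Real.cosh (b * s) * (b * 1)) - b * (Real.cosh (a * s) * (a * 1))) s := fun s =>
    ((((hasDerivAt_id s).const_mul b).sinh).const_mul a).sub
      ((((hasDerivAt_id s).const_mul a).sinh).const_mul b)
  have hmono : StrictMonoOn (fun s => a * Real.sinh (b * s) - b * Real.sinh (a * s))
      (Set.Ici 0) := by
    refine strictMonoOn_of_deriv_pos (convex_Ici 0)
      (fun s _ => (hd s).continuousAt.continuousWithinAt) fun s hs => ?_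
    rw [interior_Ici, Set.mem_Ioi] at hs
    rw [(hd s).deriv]
    have hb : 0 < b := ha.trans hab
    have hcosh : Real.cosh (a * s) < Real.cosh (b * s) := by
      rw [Real.cosh_lt_cosh, abs_of_pos (mul_pos ha hs), abs_of_pos (mul_pos hb hs)]
      exact mul_lt_mul_of_pos_right hab hs
    nlinarith [mul_pos (mul_pos ha hb) (sub_pos.2 hcosh)]
  have h := hmono Set.self_mem_Ici (Set.mem_Ici.2 ht.le) ht
  simp only [mul_zero, Real.sinh_zero, sub_zero] at h
  linarith

/-- For `k ∈ (0,1)`,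
`f₁ x = -k·x^(2-k) + (2-k)·x^k - (2-k)·x^(-k) + k·x^(k-2) < 0` for all `x > 1`. -/
theorem generalized_sci_f1_neg (k : ℝ) (hk : k ∈ Set.Ioo (0 : ℝ) 1) :
    ∀ x : ℝ, 1 < x →
      -k * x ^ (2 - k) + (2 - k) * x ^ k - (2 - k) * x ^ (-k) + k * x ^ (k - 2) < 0 := by
  intro x hx
  have hx0 : 0 < x := by linarith
  have h := mul_sinh_mul_lt hk.1 (by linarith [hk.2] : k < 2 - k) (Real.log_pos hx)
  rw [Real.sinh_eq, Real.sinh_eq] at h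
  have e1 : -(k * Real.log x) = Real.log x * (-k) := by ring
  have e2 : -((2 - k) * Real.log x) = Real.log x * (k - 2) := by ring
  rw [e1, e2, mul_comm k (Real.log x), mul_comm (2 - k) (Real.log x)] at h
  simp only [Real.rpow_def_of_pos hx0]
  linarith
end

section
/- Let k ∈ (0,1) and define f(x) = (x^(2−k) − x^k)/(x² − 1) + k − 1 for x > 1. Then f is strictly decreasing on (1, ∞). -/
/-!
Substituting `x = exp t` and `a = 1 - k`, the quotient `(x^(2-k) - x^k)/(x² - 1)` becomes
`sinh (a t) / sinh t`. The numerator of its derivative is the negative of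
`sinh (a t) cosh t - a cosh (a t) sinh t`, which vanishes at `0` and has derivative
`(1 - a²) sinh (a t) sinh t > 0` for `t > 0`; hence the quotient is strictly decreasing.
-/

lemma sinh_mul_cosh_sub_pos {a t : ℝ} (ha : 0 < a) (ha1 : a < 1) (ht : 0 < t) :
    0 < Real.sinh (a * t) * Real.cosh t - a * Real.cosh (a * t) * Real.sinh t := by
  have hd : ∀ s : ℝ, HasDerivAt
      (fun s => Real.sinh (a * s) * Real.cosh s - a * Real.cosh (a * s) * Real.sinh s)
      ((1 - a ^ 2) * (Real.sinh (a * s) * Real.sinh s)) s := by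
    intro s
    have hm : HasDerivAt (fun s => a * s) a s := by
      simpa using (hasDerivAt_id s).const_mul a
    refine ((hm.sinh.mul (Real.hasDerivAt_cosh s)).sub
      ((hm.cosh.const_mul a).mul (Real.hasDerivAt_sinh s))).congr_deriv ?_
    ring
  have hmono : StrictMonoOn
      (fun s => Real.sinh (a * s) * Real.cosh s - a * Real.cosh (a * s) * Real.sinh s)
      (Set.Ici 0) := by
    refine strictMonoOn_of_deriv_pos (convex_Ici 0)
      (fun s _ => (hd s).continuousAt.continuousWithinAt) fun s hs => ?_
    rw [interior_Ici, Set.mem_Ioi] at hs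
    rw [(hd s).deriv]
    have h1 := Real.sinh_pos_iff.2 hs
    have h2 := Real.sinh_pos_iff.2 (mul_pos ha hs)
    have h3 : 0 < 1 - a ^ 2 := by nlinarith
    positivity
  simpa using hmono (Set.mem_Ici.2 le_rfl) (Set.mem_Ici.2 ht.le) ht

lemma sinh_mul_div_sinh_strictAntiOn {a : ℝ} (ha : 0 < a) (ha1 : a < 1) :
    StrictAntiOn (fun t => Real.sinh (a * t) / Real.sinh t) (Set.Ioi 0) := by
  have hd : ∀ s : ℝ, 0 < s → HasDerivAt (fun t => Real.sinh (a * t) / Real.sinh t)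
      (-(Real.sinh (a * s) * Real.cosh s - a * Real.cosh (a * s) * Real.sinh s)
        / Real.sinh s ^ 2) s := by
    intro s hs
    have hm : HasDerivAt (fun s => a * s) a s := by
      simpa using (hasDerivAt_id s).const_mul a
    refine (hm.sinh.div (Real.hasDerivAt_sinh s) (Real.sinh_pos_iff.2 hs).ne').congr_deriv ?_
    ring
  refine strictAntiOn_of_deriv_neg (convex_Ioi 0)
    (fun s hs => (hd s hs).continuousAt.continuousWithinAt) fun s hs => ?_
  rw [interior_Ioi, Set.mem_Ioi] at hs
  rw [(hd s hs).deriv]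
  exact div_neg_of_neg_of_pos (neg_neg_of_pos (sinh_mul_cosh_sub_pos ha ha1 hs))
    (pow_pos (Real.sinh_pos_iff.2 hs) 2)

lemma rpow_quotient_eq_sinh (k : ℝ) {x : ℝ} (hx : 1 < x) :
    (x ^ (2 - k) - x ^ k) / (x ^ 2 - 1)
      = Real.sinh ((1 - k) * Real.log x) / Real.sinh (Real.log x) := by
  have hx0 : 0 < x := by linarith
  have hs : Real.sinh (Real.log x) ≠ 0 := (Real.sinh_pos_iff.2 (Real.log_pos hx)).ne'
  have hden : x ^ 2 - 1 = 2 * x * Real.sinh (Real.log x) := by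
    rw [Real.sinh_log hx0]
    field_simp
  have hnum : x ^ (2 - k) - x ^ k = 2 * x * Real.sinh ((1 - k) * Real.log x) := by
    have e1 : x ^ (2 - k) = x * Real.exp ((1 - k) * Real.log x) := by
      nth_rewrite 2 [← Real.exp_log hx0]
      rw [Real.rpow_def_of_pos hx0, ← Real.exp_add]
      ring_nf
    have e2 : x ^ k = x * Real.exp (-((1 - k) * Real.log x)) := by
      nth_rewrite 2 [← Real.exp_log hx0]
      rw [Real.rpow_def_of_pos hx0, ← Real.exp_add]
      ring_nf
    rw [e1, e2, Real.sinh_eq]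
    ring
  rw [hnum, hden, mul_div_mul_left _ _ (by positivity)]

/-- For `k ∈ (0,1)`, the function
`f x = (x^(2-k) - x^k)/(x² - 1) + k - 1` is strictly decreasing on `(1,∞)`. -/
theorem generalized_sci_f_strict_anti (k : ℝ) (hk : k ∈ Set.Ioo (0 : ℝ) 1) :
    StrictAntiOn (fun x : ℝ => (x ^ (2 - k) - x ^ k) / (x ^ 2 - 1) + k - 1)
      (Set.Ioi 1) := by
  intro x hx y hy hxy
  rw [Set.mem_Ioi] at hx hy
  have h := sinh_mul_div_sinh_strictAntiOn (a := 1 - k) (by linarith [hk.2]) (by linarith [hk.1])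
    (Set.mem_Ioi.2 (Real.log_pos hx)) (Set.mem_Ioi.2 (Real.log_pos hy))
    (Real.log_lt_log (by linarith) hxy)
  simp only [rpow_quotient_eq_sinh k hx, rpow_quotient_eq_sinh k hy]
  linarith
end

section
/- Let a, b, k be real numbers with b > a > 0 and k ∈ [0,1], and let x be a real number such that (8 + b²x²)/(8 + a²x²) = (b/a)^k. Then (a²x²)/(8 + a²x²) + (b²x²)/(8 + b²x²) ≥ k. Moreover, if k ∈ (0,1), then the inequality is strict. -/
/-!
Put `r = b / a > 1`, `t = log r > 0` and `R = r ^ k = exp (k t)`. The hypothesis is linear in `x ^ 2`,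
and eliminating `x ^ 2` turns the left-hand side into
`1 - (r / R - R / r) / (r - 1 / r) = 1 - sinh ((1 - k) t) / sinh t`.
The claim is therefore `sinh ((1 - k) t) ≤ (1 - k) sinh t`, which is the convexity of `sinh` on
`[0, ∞)` between the points `0` and `t`; strict convexity gives the strict version for `0 < k < 1`.
-/

theorem strictConvexOn_sinh_Ici : StrictConvexOn ℝ (Set.Ici (0 : ℝ)) Real.sinh := by
  refine StrictMonoOn.strictConvexOn_of_deriv (convex_Ici 0) Real.continuous_sinh.continuousOn ?_
  rw [Real.deriv_sinh]
  exact Real.cosh_strictMonoOn.mono interior_subset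

theorem sinh_mul_lt {s t : ℝ} (hs : 0 < s) (hs1 : s < 1) (ht : 0 < t) :
    Real.sinh (s * t) < s * Real.sinh t := by
  have h := strictConvexOn_sinh_Ici.2 (Set.mem_Ici.2 le_rfl) (Set.mem_Ici.2 ht.le) ht.ne
    (sub_pos.2 hs1) hs (by ring)
  simpa using h

/-- Elimination of `x ^ 2`, with `y = x ^ 2` and `R` standing for the common value of both sides
of the hypothesis. -/
theorem sum_eq_one_sub {a b y R : ℝ} (ha : 0 < a) (hab : a < b) (hy : 0 ≤ y) (hR : 0 < R)
    (h : (8 + b ^ 2 * y) / (8 + a ^ 2 * y) = R) :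
    a ^ 2 * y / (8 + a ^ 2 * y) + b ^ 2 * y / (8 + b ^ 2 * y) =
      1 - (b / a / R - R / (b / a)) / (b / a - (b / a)⁻¹) := by
  have hb : 0 < b := ha.trans hab
  have hA : 0 < 8 + a ^ 2 * y := by positivity
  have hB : 0 < 8 + b ^ 2 * y := by positivity
  have hd : 0 < b ^ 2 - a ^ 2 := by nlinarith
  have hd' : b / a - (b / a)⁻¹ = (b ^ 2 - a ^ 2) / (a * b) := by field_simp
  subst h
  rw [hd']
  have := hd.ne'
  field_simp
  ring

/-- If `b > a > 0`, `k ∈ [0,1]`, and `(8 + b²x²)/(8 + a²x²) = (b/a)^k`, then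
`a²x²/(8 + a²x²) + b²x²/(8 + b²x²) ≥ k`, with strict inequality when `k ∈ (0,1)`. -/
theorem generalized_sci_calc_lemma (a b k x : ℝ) (ha : 0 < a) (hab : a < b)
    (hk : k ∈ Set.Icc (0 : ℝ) 1)
    (hyp : (8 + b ^ 2 * x ^ 2) / (8 + a ^ 2 * x ^ 2) = (b / a) ^ k) :
    a ^ 2 * x ^ 2 / (8 + a ^ 2 * x ^ 2) + b ^ 2 * x ^ 2 / (8 + b ^ 2 * x ^ 2) ≥ k ∧
    (k ∈ Set.Ioo (0 : ℝ) 1 →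
      a ^ 2 * x ^ 2 / (8 + a ^ 2 * x ^ 2) + b ^ 2 * x ^ 2 / (8 + b ^ 2 * x ^ 2) > k) := by
  have hb : 0 < b := ha.trans hab
  have hr : 1 < b / a := (one_lt_div ha).2 hab
  have hr0 : 0 < b / a := one_pos.trans hr
  have ht : 0 < Real.log (b / a) := Real.log_pos hr
  have hsinh : 0 < Real.sinh (Real.log (b / a)) := Real.sinh_pos_iff.2 ht
  have hsum : a ^ 2 * x ^ 2 / (8 + a ^ 2 * x ^ 2) + b ^ 2 * x ^ 2 / (8 + b ^ 2 * x ^ 2) =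
      1 - Real.sinh ((1 - k) * Real.log (b / a)) / Real.sinh (Real.log (b / a)) := by
    rw [sum_eq_one_sub ha hab (sq_nonneg x) (Real.rpow_pos_of_pos hr0 k) hyp]
    have h1 : Real.exp ((1 - k) * Real.log (b / a)) = b / a / (b / a) ^ k := by
      rw [mul_comm, ← Real.rpow_def_of_pos hr0, Real.rpow_sub hr0, Real.rpow_one]
    rw [Real.sinh_eq, Real.sinh_eq, Real.exp_neg, Real.exp_neg, h1, Real.exp_log hr0,
      div_div_div_cancel_right₀ two_ne_zero, inv_div (b / a) ((b / a) ^ k)]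
  have hstrict : k ∈ Set.Ioo (0 : ℝ) 1 →
      a ^ 2 * x ^ 2 / (8 + a ^ 2 * x ^ 2) + b ^ 2 * x ^ 2 / (8 + b ^ 2 * x ^ 2) > k := by
    rintro ⟨hk0, hk1⟩
    have h := (div_lt_iff₀ hsinh).2 (sinh_mul_lt (sub_pos.2 hk1) (sub_lt_self 1 hk0) ht)
    rw [hsum]
    linarith
  refine ⟨?_, hstrict⟩
  rcases hk.1.eq_or_lt with rfl | hk0
  · positivity
  rcases hk.2.eq_or_lt with rfl | hk1
  · rw [hsum]
    simp
  · exact (hstrict ⟨hk0, hk1⟩).le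
end

section
/- Let a, b, k be real numbers with b > a > 0 and k ∈ [0,1], and let x be a real number such that (8 + b²x²)/(8 + a²x²) = (b/a)^k. Then (a²x²)/(8 + a²x²) + (b²x²)/(8 + b²x²) = 1 − ((b/a)^(2−k) − (b/a)^k)/((b/a)² − 1). -/
/-- If `b > a > 0`, `k ∈ [0,1]`, and `(8 + b²x²)/(8 + a²x²) = (b/a)^k`, then
`a²x²/(8 + a²x²) + b²x²/(8 + b²x²) = 1 - ((b/a)^(2-k) - (b/a)^k)/((b/a)² - 1)`. -/
theorem generalized_sci_calc_identity (a b k x : ℝ) (ha : 0 < a) (hab : a < b)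
    (hk : k ∈ Set.Icc (0 : ℝ) 1)
    (hyp : (8 + b ^ 2 * x ^ 2) / (8 + a ^ 2 * x ^ 2) = (b / a) ^ k) :
    a ^ 2 * x ^ 2 / (8 + a ^ 2 * x ^ 2) + b ^ 2 * x ^ 2 / (8 + b ^ 2 * x ^ 2) =
      1 - ((b / a) ^ (2 - k) - (b / a) ^ k) / ((b / a) ^ 2 - 1) := by
  have hb : 0 < b := ha.trans hab
  have hr : 0 < b / a := div_pos hb ha
  have hA : 8 + a ^ 2 * x ^ 2 ≠ 0 := by positivity
  have hB : 8 + b ^ 2 * x ^ 2 ≠ 0 := by positivity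
  have hba : b ^ 2 - a ^ 2 ≠ 0 := by nlinarith
  have hden : (b / a) ^ 2 - 1 = (b ^ 2 - a ^ 2) / a ^ 2 := by field_simp
  rw [Real.rpow_sub hr, Real.rpow_two, ← hyp, hden]
  -- With `A = 8 + a²x²` and `B = 8 + b²x²`, what remains rests on
  -- `b²A² - a²B² = (b² - a²)(64 - a²b²x⁴)`.
  field_simp
  ring
end

section
/- Let b > a > 0, k ∈ (0,1], and R > 0. Suppose that U_b(y) − U_a(y) = 2(1 − k)·log(b/a) for all y ∈ ℝ² with |y| = R. Then ∫_{B_R} (e^(U_a) + e^(U_b)) dy ≥ 8kπ, where the integral is with respect to Lebesgue measure on ℝ². Moreover, the inequality is strict if k ∈ (0,1). -/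
/-!
In polar coordinates the mass of a bubble is explicit: `∫_{B_R} e^{U_λ} = 8π Λ / (1 + Λ)` with
`Λ = λ²R²/8` (`integral_bubble`). Put `h = log (b/a) > 0`, `A = a²R²/8`, `B = b²R²/8`. The boundary
condition says `(1 + B) / (1 + A) = e^{kh}`, and since `B / A = e^{2h}` an elementary computation
gives
`A / (1 + A) + B / (1 + B) = 1 - sinh ((1 - k) h) / sinh h` (`mass_mul_sinh`).
Hence the claim is `sinh ((1 - k) h) ≤ (1 - k) sinh h`, which is the convexity of `sinh` on
`[0, ∞)` together with `sinh 0 = 0`; strict convexity gives the strict inequality for `0 < k < 1`.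
-/

open Real MeasureTheory

/-- The standard bubble `U_λ(y) = -2 log(1 + λ²|y|²/8) + 2 log λ`. -/
noncomputable def Ufun (lam : ℝ) (y : EuclideanSpace ℝ (Fin 2)) : ℝ :=
  -2 * Real.log (1 + lam ^ 2 * ‖y‖ ^ 2 / 8) + 2 * Real.log lam

lemma exp_Ufun (l : ℝ) (hl : 0 < l) (y : EuclideanSpace ℝ (Fin 2)) :
    Real.exp (Ufun l y) = l ^ 2 / (1 + l ^ 2 * ‖y‖ ^ 2 / 8) ^ 2 := by
  have h1 : 0 < 1 + l ^ 2 * ‖y‖ ^ 2 / 8 := by positivity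
  have h2 : Ufun l y = Real.log (l ^ 2 / (1 + l ^ 2 * ‖y‖ ^ 2 / 8) ^ 2) := by
    rw [Real.log_div (by positivity) (by positivity), Real.log_pow, Real.log_pow, Ufun]
    push_cast
    ring
  rw [h2, Real.exp_log (by positivity)]

lemma integral_ball_radial (f : ℝ → ℝ) (R : ℝ) (hR : 0 < R) :
    ∫ y in Metric.ball (0 : EuclideanSpace ℝ (Fin 2)) R, f ‖y‖
      = 2 * π * ∫ r in (0 : ℝ)..R, r * f r := by
  have hball : ∀ y : EuclideanSpace ℝ (Fin 2),
      (Metric.ball (0 : EuclideanSpace ℝ (Fin 2)) R).indicator (fun y => f ‖y‖) y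
        = (Set.Iio R).indicator f ‖y‖ := by
    intro y
    by_cases h : ‖y‖ < R <;> simp [Set.indicator, h]
  rw [← integral_indicator measurableSet_ball]
  simp_rw [hball]
  rw [integral_fun_norm_addHaar]
  have hvol : (volume : Measure (EuclideanSpace ℝ (Fin 2))).real (Metric.ball 0 1) = π := by
    simp [Measure.real, Real.pi_pos.le]
  have hind : ∀ r : ℝ, r ^ (2 - 1) • (Set.Iio R).indicator f r
      = (Set.Iio R).indicator (fun r => r * f r) r := by
    intro r
    by_cases h : r < R <;> simp [Set.indicator, h]
  rw [hvol, finrank_euclideanSpace_fin]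
  simp_rw [hind]
  rw [setIntegral_indicator measurableSet_Iio, Set.Ioi_inter_Iio, ← integral_Ioc_eq_integral_Ioo,
    ← intervalIntegral.integral_of_le hR.le]
  simp only [nsmul_eq_mul, smul_eq_mul]
  push_cast
  ring

lemma integral_bubble_radial (l R : ℝ) :
    ∫ r in (0 : ℝ)..R, r * (l ^ 2 / (1 + l ^ 2 * r ^ 2 / 8) ^ 2)
      = 4 * (1 - 1 / (1 + l ^ 2 * R ^ 2 / 8)) := by
  have hpos : ∀ r : ℝ, 1 + l ^ 2 * r ^ 2 / 8 ≠ 0 := fun r => by positivity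
  rw [intervalIntegral.integral_eq_sub_of_hasDerivAt
    (f := fun r => -4 * (1 + l ^ 2 * r ^ 2 / 8)⁻¹)]
  · simp
    ring
  · intro r _
    have h := ((((hasDerivAt_pow 2 r).const_mul (l ^ 2)).div_const 8).const_add 1).inv (hpos r)
    refine (h.const_mul (-4)).congr_deriv ?_
    simp only [Nat.cast_ofNat, Nat.add_one_sub_one, pow_one]
    ring
  · apply Continuous.intervalIntegrable
    fun_prop (disch := intro r; exact pow_ne_zero 2 (hpos r))

lemma integrableOn_bubble (l R : ℝ) (hl : 0 < l) :
    IntegrableOn (fun y => Real.exp (Ufun l y))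
      (Metric.ball (0 : EuclideanSpace ℝ (Fin 2)) R) := by
  have hc : Continuous fun y : EuclideanSpace ℝ (Fin 2) => Real.exp (Ufun l y) := by
    simp_rw [exp_Ufun l hl]
    refine Continuous.div (by fun_prop) (by fun_prop) fun y => ?_
    positivity
  exact (hc.continuousOn.integrableOn_compact (isCompact_closedBall 0 R)).mono_set
    Metric.ball_subset_closedBall

lemma integral_bubble (l R : ℝ) (hl : 0 < l) (hR : 0 < R) :
    ∫ y in Metric.ball (0 : EuclideanSpace ℝ (Fin 2)) R, Real.exp (Ufun l y)
      = 8 * π * (1 - 1 / (1 + l ^ 2 * R ^ 2 / 8)) := by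
  simp_rw [exp_Ufun l hl]
  rw [integral_ball_radial (fun r => l ^ 2 / (1 + l ^ 2 * r ^ 2 / 8) ^ 2) R hR,
    integral_bubble_radial]
  ring

lemma sinh_mul_lt_s10 (t h : ℝ) (ht0 : 0 < t) (ht1 : t < 1) (hh : 0 < h) :
    Real.sinh (t * h) < t * Real.sinh h := by
  have hconv : StrictConvexOn ℝ (Set.Ici 0) Real.sinh := by
    refine strictConvexOn_of_deriv2_pos (convex_Ici 0) Real.continuous_sinh.continuousOn ?_
    intro x hx
    rw [interior_Ici] at hx
    simpa using hx
  have := hconv.2 (Set.mem_Ici.2 hh.le) (Set.mem_Ici.2 le_rfl) hh.ne' ht0 (sub_pos.2 ht1)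
    (add_sub_cancel t 1)
  simpa using this

/-- The total mass divided by `8π` equals `1 - sinh ((1 - k) h) / sinh h` with `h = log (b/a)`,
where `s` stands for `R² / 8` and `hE` is the boundary condition with the factor `2` removed. -/
lemma mass_mul_sinh (a b k s : ℝ) (ha : 0 < a) (hb : 0 < b) (hs : 0 < s)
    (hE : Real.log ((1 + b ^ 2 * s) / (1 + a ^ 2 * s)) = k * Real.log (b / a)) :
    ((1 - 1 / (1 + a ^ 2 * s)) + (1 - 1 / (1 + b ^ 2 * s))) * Real.sinh (Real.log (b / a))
      = Real.sinh (Real.log (b / a)) - Real.sinh ((1 - k) * Real.log (b / a)) := by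
  have hx : 0 < b / a := by positivity
  have hy : 0 < (1 + b ^ 2 * s) / (1 + a ^ 2 * s) := by positivity
  have hu : (1 - k) * Real.log (b / a)
      = Real.log ((b / a) / ((1 + b ^ 2 * s) / (1 + a ^ 2 * s))) := by
    rw [Real.log_div hx.ne' hy.ne', hE]
    ring
  rw [hu, Real.sinh_log hx, Real.sinh_log (by positivity)]
  field_simp
  ring

/-- Let `b > a > 0`, `k ∈ (0,1]`, `R > 0`. If
`U_b(y) - U_a(y) = 2(1-k)·log(b/a)` on `|y| = R`, then
`∫_{B_R} (e^(U_a) + e^(U_b)) dy ≥ 8kπ`, with strict inequality if `k ∈ (0,1)`. -/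
theorem radial_generalized_sci (a b k R : ℝ) (ha : 0 < a) (hab : a < b)
    (hk : k ∈ Set.Ioc (0 : ℝ) 1) (hR : 0 < R)
    (hyp : ∀ y : EuclideanSpace ℝ (Fin 2), ‖y‖ = R →
      Ufun b y - Ufun a y = 2 * (1 - k) * Real.log (b / a)) :
    (∫ y in Metric.ball (0 : EuclideanSpace ℝ (Fin 2)) R,
        (Real.exp (Ufun a y) + Real.exp (Ufun b y))) ≥ 8 * k * π ∧
    (k ∈ Set.Ioo (0 : ℝ) 1 →
      (∫ y in Metric.ball (0 : EuclideanSpace ℝ (Fin 2)) R,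
        (Real.exp (Ufun a y) + Real.exp (Ufun b y))) > 8 * k * π) := by
  have hb : 0 < b := ha.trans hab
  have hs : 0 < R ^ 2 / 8 := by positivity
  have hh : 0 < Real.log (b / a) := Real.log_pos ((one_lt_div ha).2 hab)
  have hsinh : 0 < Real.sinh (Real.log (b / a)) := Real.sinh_pos_iff.2 hh
  have hE : Real.log ((1 + b ^ 2 * (R ^ 2 / 8)) / (1 + a ^ 2 * (R ^ 2 / 8)))
      = k * Real.log (b / a) := by
    have h := hyp (EuclideanSpace.single 0 R) (by simp [abs_of_pos hR])
    simp only [Ufun, EuclideanSpace.norm_single, Real.norm_eq_abs, sq_abs, mul_div_assoc] at h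
    rw [Real.log_div (by positivity) (by positivity)]
    rw [Real.log_div hb.ne' ha.ne'] at h ⊢
    linarith
  have hmass := mass_mul_sinh a b k (R ^ 2 / 8) ha hb hs hE
  have hint : (∫ y in Metric.ball (0 : EuclideanSpace ℝ (Fin 2)) R,
        (Real.exp (Ufun a y) + Real.exp (Ufun b y)))
      = 8 * π * ((1 - 1 / (1 + a ^ 2 * (R ^ 2 / 8))) + (1 - 1 / (1 + b ^ 2 * (R ^ 2 / 8)))) := by
    rw [integral_add (integrableOn_bubble a R ha) (integrableOn_bubble b R hb),
      integral_bubble a R ha hR, integral_bubble b R hb hR]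
    ring
  have hstrict : k < 1 →
      k < (1 - 1 / (1 + a ^ 2 * (R ^ 2 / 8))) + (1 - 1 / (1 + b ^ 2 * (R ^ 2 / 8))) := by
    intro hk1
    have h := sinh_mul_lt_s10 (1 - k) _ (by linarith) (by linarith [hk.1]) hh
    refine lt_of_mul_lt_mul_right ?_ hsinh.le
    rw [hmass]
    linarith
  rw [hint]
  constructor
  · rcases hk.2.lt_or_eq with hk1 | rfl
    · nlinarith [hstrict hk1, Real.pi_pos]
    · -- For `k = 1` the hyperbolic sine of `(1 - k) h = 0` vanishes, so the mass is exactly `8π`.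
      rw [sub_self, zero_mul, Real.sinh_zero, sub_zero] at hmass
      rw [mul_eq_right₀ hsinh.ne'] at hmass
      rw [hmass]
      linarith
  · intro hk1
    nlinarith [hstrict hk1.2, Real.pi_pos]
end

section
/- Let R > 0, b > 0, and let g : [0,R] → ℝ be a Lipschitz, strictly decreasing function with g(0) = 2·log b (= U_b(0)). Define ψ : ℝ² → ℝ on the closed ball of radius R by ψ(y) = g(|y|), and assume that for almost every r ∈ (0,R), 2πr·|g'(r)| ≤ ∫_{B_r} e^(ψ) dy. Then for every b' with 0 < b' < b, the strict inequality ∫_{B_R} e^(ψ) dy > ∫_{B_R} e^(U_{b'}) dy holds. -/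
/-!
With `N(r) = ∫₀ʳ s e^{g(s)} ds`, so that `∫_{B_r} e^ψ = 2π N(r)`, the hypothesis reads
`-r g'(r) ≤ N(r)`, and `N'(r) = r e^{g(r)}`. Almost everywhere,
`(r² e^g)' = 2 r e^g + r² g' e^g ≥ 2N' - N N' = (2N - N²/2)'`.
Both sides are locally Lipschitz in `r` and vanish at `0`, hence `2N - N²/2 ≤ r² e^g = r N'`
(`two_mul_sub_sq_le`), with equality for the bubbles.

If `N(R) ≥ 4` there is nothing to prove, since the mass of a bubble satisfies
`N_λ(R) = 4t/(1+t) < 4`, where `t = λ²R²/8`. Otherwise the differential inequality says exactly that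
`N / (r² (4 - N))` is nondecreasing on `(0, R]`. Near `0` one has `e^g ≥ b'²`, so `N ≥ b'² r²/2` and
the quotient exceeds `b'²/8`; therefore it exceeds `b'²/8` at `R`, which rearranges to
`N(R) > N_{b'}(R)` (`bubble_mass_lt`).
-/

open Real MeasureTheory

/-- Half the radial mass: `∫_{B_r} e^{G(|y|)} dy = 2π · radMass G r`. -/
noncomputable def radMass (G : ℝ → ℝ) (r : ℝ) : ℝ := ∫ s in (0 : ℝ)..r, s * Real.exp (G s)

lemma radMass_hasDerivAt {G : ℝ → ℝ} (hG : Continuous G) (r : ℝ) :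
    HasDerivAt (radMass G) (r * Real.exp (G r)) r := by
  have hc : Continuous fun s => s * Real.exp (G s) := by fun_prop
  exact intervalIntegral.integral_hasDerivAt_right (hc.intervalIntegrable _ _)
    hc.aestronglyMeasurable.stronglyMeasurableAtFilter hc.continuousAt

lemma radMass_locallyLipschitz {G : ℝ → ℝ} (hG : Continuous G) :
    LocallyLipschitz (radMass G) := by
  have h : ContDiff ℝ 1 (radMass G) := by
    rw [contDiff_one_iff_deriv]
    refine ⟨fun r => (radMass_hasDerivAt hG r).differentiableAt, ?_⟩
    have : deriv (radMass G) = fun r => r * Real.exp (G r) :=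
      funext fun r => (radMass_hasDerivAt hG r).deriv
    rw [this]
    fun_prop
  exact h.locallyLipschitz

lemma radMass_monotoneOn {G : ℝ → ℝ} (hG : Continuous G) :
    MonotoneOn (radMass G) (Set.Ici 0) := by
  refine monotoneOn_of_hasDerivWithinAt_nonneg (convex_Ici 0)
    (fun r _ => (radMass_hasDerivAt hG r).continuousAt.continuousWithinAt)
    (fun r _ => (radMass_hasDerivAt hG r).hasDerivWithinAt) fun r hr => ?_
  rw [interior_Ici] at hr
  exact mul_nonneg (le_of_lt hr) (Real.exp_pos _).le

lemma setIntegral_ball_radial (f : ℝ → ℝ) {r : ℝ} (hr : 0 ≤ r) :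
    ∫ y in Metric.ball (0 : EuclideanSpace ℝ (Fin 2)) r, f ‖y‖ =
      2 * π * ∫ s in (0 : ℝ)..r, s * f s := by
  have h1 : ∫ y in Metric.ball (0 : EuclideanSpace ℝ (Fin 2)) r, f ‖y‖ =
      ∫ y : EuclideanSpace ℝ (Fin 2), (Set.Iio r).indicator f ‖y‖ := by
    rw [← integral_indicator measurableSet_ball]
    congr 1
    ext y
    by_cases h : ‖y‖ < r
    · rw [Set.indicator_of_mem (mem_ball_zero_iff.2 h), Set.indicator_of_mem (Set.mem_Iio.2 h)]
    · rw [Set.indicator_of_notMem (mt mem_ball_zero_iff.1 h),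
        Set.indicator_of_notMem (mt Set.mem_Iio.1 h)]
  have hvol : (volume : Measure (EuclideanSpace ℝ (Fin 2))).real (Metric.ball 0 1) = π := by
    simp [Measure.real, Real.pi_pos.le]
  have h2 : ∀ y : ℝ, y * (Set.Iio r).indicator f y = (Set.Iio r).indicator (fun s => s * f s) y := by
    intro y
    simp [Set.indicator_apply]
  rw [h1, integral_fun_norm_addHaar, hvol]
  simp only [finrank_euclideanSpace, Fintype.card_fin, smul_eq_mul, nsmul_eq_mul,
    Nat.add_one_sub_one, pow_one, h2]
  rw [setIntegral_indicator measurableSet_Iio, Set.Ioi_inter_Iio,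
    intervalIntegral.integral_of_le hr, integral_Ioc_eq_integral_Ioo]
  push_cast
  ring

/-- The integrated form of `(r² e^G)' ≥ (2N - N²/2)'`, where `N = radMass G`. Local Lipschitz
continuity is what allows integrating an inequality that holds only almost everywhere. -/
lemma two_mul_sub_sq_le {R : ℝ} {G : ℝ → ℝ} {L : NNReal} (hL : LipschitzWith L G)
    (hder : ∀ᵐ r, r ∈ Set.Ioo 0 R → r * |deriv G r| ≤ radMass G r) {r : ℝ}
    (hr : r ∈ Set.Icc 0 R) :
    2 * radMass G r - radMass G r ^ 2 / 2 ≤ r ^ 2 * Real.exp (G r) := by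
  have hG := hL.continuous
  set W : ℝ → ℝ := fun s => s ^ 2 * Real.exp (G s) - 2 * radMass G s + radMass G s ^ 2 / 2 with hW
  have hWL : LocallyLipschitz W := by
    have hΦ : ContDiff ℝ 1 fun p : ℝ × ℝ × ℝ =>
        p.1 ^ 2 * Real.exp p.2.1 - 2 * p.2.2 + p.2.2 ^ 2 / 2 := by fun_prop
    have hp : LocallyLipschitz fun s => (s, G s, radMass G s) :=
      LocallyLipschitz.id.prodMk (hL.locallyLipschitz.prodMk (radMass_locallyLipschitz hG))
    have hcomp := hΦ.locallyLipschitz.comp hp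
    exact hcomp
  obtain ⟨K, hK⟩ := (hWL.locallyLipschitzOn (s := Set.uIcc 0 r)).exists_lipschitzOnWith_of_compact
    isCompact_uIcc
  have hint := hK.absolutelyContinuousOnInterval.integral_deriv_eq_sub
  have hW0 : W 0 = 0 := by simp [hW, radMass]
  have hnn : 0 ≤ ∫ x in (0 : ℝ)..r, deriv W x := by
    rw [intervalIntegral.integral_of_le hr.1, integral_Ioc_eq_integral_Ioo]
    refine setIntegral_nonneg_of_ae_restrict ?_
    rw [Filter.EventuallyLE, ae_restrict_iff' measurableSet_Ioo]
    filter_upwards [hder, hL.ae_differentiableAt (μ := volume)] with x hx hdx hxr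
    have hx' := hx ⟨hxr.1, hxr.2.trans_le hr.2⟩
    have hN := radMass_hasDerivAt hG x
    have hd : HasDerivAt W _ x :=
      ((((hasDerivAt_id x).pow 2).mul hdx.hasDerivAt.exp).sub (hN.const_mul 2)).add
        ((hN.pow 2).div_const 2)
    rw [hd.deriv]
    have hab : -(x * deriv G x) ≤ radMass G x := by
      nlinarith [neg_abs_le (deriv G x), hxr.1]
    have := mul_nonneg (mul_nonneg hxr.1.le (Real.exp_pos (G x)).le) (sub_nonneg.2 hab)
    simp only [Pi.zero_apply, id, Pi.pow_apply]
    norm_num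
    nlinarith
  rw [hint, hW0] at hnn
  simp only [hW] at hnn
  linarith

lemma bubble_mass_lt {R c : ℝ} (hR : 0 < R) (hc : 0 < c) {G : ℝ → ℝ} {L : NNReal}
    (hL : LipschitzWith L G) (hG0 : 2 * Real.log c < G 0)
    (hder : ∀ᵐ r, r ∈ Set.Ioo 0 R → r * |deriv G r| ≤ radMass G r) :
    4 * (c ^ 2 * R ^ 2 / 8) / (1 + c ^ 2 * R ^ 2 / 8) < radMass G R := by
  have hG := hL.continuous
  have ht : 0 < 1 + c ^ 2 * R ^ 2 / 8 := by positivity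
  rw [div_lt_iff₀ ht]
  rcases le_or_gt 4 (radMass G R) with h4 | h4
  · nlinarith
  obtain ⟨δ, hδ, hball⟩ := Metric.eventually_nhds_iff.1 (hG.continuousAt.eventually_const_lt hG0)
  set ε := min (δ / 2) R with hε
  have hε0 : 0 < ε := by positivity
  have hεR : ε ≤ R := min_le_right _ _
  have hlow : c ^ 2 * ε ^ 2 / 2 ≤ radMass G ε := by
    have h1 : ∫ s in (0 : ℝ)..ε, s * c ^ 2 = c ^ 2 * ε ^ 2 / 2 := by
      rw [intervalIntegral.integral_mul_const, integral_id]
      ring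
    rw [← h1]
    refine intervalIntegral.integral_mono_on hε0.le
      (Continuous.intervalIntegrable (by fun_prop) _ _)
      (Continuous.intervalIntegrable (by fun_prop) _ _) fun s hs => ?_
    refine mul_le_mul_of_nonneg_left ?_ hs.1
    have hs2 : 2 * Real.log c < G s := by
      refine hball ?_
      rw [Real.dist_eq, sub_zero, abs_of_nonneg hs.1]
      linarith [hs.2, min_le_left (δ / 2) R]
    have : c ^ 2 = Real.exp (2 * Real.log c) := by
      rw [two_mul, Real.exp_add, Real.exp_log hc, sq]
    rw [this]
    exact Real.exp_le_exp.2 hs2.le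
  have hlt : ∀ r ∈ Set.Icc ε R, radMass G r < 4 := fun r hr =>
    (radMass_monotoneOn hG (hε0.le.trans hr.1) hR.le hr.2).trans_lt h4
  have hFd : ∀ r ∈ Set.Icc ε R, HasDerivAt (fun r => radMass G r / (r ^ 2 * (4 - radMass G r)))
      (2 * r * (2 * (r ^ 2 * Real.exp (G r)) - radMass G r * (4 - radMass G r)) /
        (r ^ 2 * (4 - radMass G r)) ^ 2) r := by
    intro r hr
    have hr0 : 0 < r := hε0.trans_le hr.1
    have hN := radMass_hasDerivAt hG r
    have hne : r ^ 2 * (4 - radMass G r) ≠ 0 :=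
      (mul_pos (pow_pos hr0 2) (sub_pos.2 (hlt r hr))).ne'
    have hd := hN.div (((hasDerivAt_id r).pow 2).mul (hN.const_sub 4)) hne
    refine hd.congr_deriv ?_
    simp only [id, Pi.pow_apply, Pi.mul_apply]
    congr 1
    norm_num
    ring
  have hmono : MonotoneOn (fun r => radMass G r / (r ^ 2 * (4 - radMass G r))) (Set.Icc ε R) := by
    refine monotoneOn_of_hasDerivWithinAt_nonneg (convex_Icc ε R)
      (fun r hr => (hFd r hr).continuousAt.continuousWithinAt)
      (fun r hr => (hFd r (interior_subset hr)).hasDerivWithinAt) fun r hr => ?_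
    have hr' := interior_subset hr
    have hr0 : 0 < r := hε0.trans_le hr'.1
    have := two_mul_sub_sq_le hL hder ⟨hr0.le, hr'.2⟩
    refine div_nonneg (mul_nonneg (by linarith) ?_) (sq_nonneg _)
    linarith
  have hle := hmono ⟨le_rfl, hεR⟩ ⟨hεR, le_rfl⟩ hεR
  have hstart : c ^ 2 / 8 < radMass G ε / (ε ^ 2 * (4 - radMass G ε)) := by
    have h1 := hlt ε ⟨le_rfl, hεR⟩
    have h2 : 0 < c ^ 2 * ε ^ 2 := by positivity
    rw [lt_div_iff₀ (mul_pos (pow_pos hε0 2) (sub_pos.2 h1))]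
    nlinarith
  have hend := hstart.trans_le hle
  rw [lt_div_iff₀ (mul_pos (pow_pos hR 2) (sub_pos.2 h4))] at hend
  nlinarith

lemma integral_exp_Ufun {R c : ℝ} (hR : 0 < R) (hc : 0 < c) :
    ∫ y in Metric.ball (0 : EuclideanSpace ℝ (Fin 2)) R, Real.exp (Ufun c y) =
      2 * π * (4 * (c ^ 2 * R ^ 2 / 8) / (1 + c ^ 2 * R ^ 2 / 8)) := by
  have hpos : ∀ s : ℝ, 0 < 1 + c ^ 2 * s ^ 2 / 8 := fun s => by positivity
  have hexp : ∀ y : EuclideanSpace ℝ (Fin 2),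
      Real.exp (Ufun c y) = (fun s : ℝ => c ^ 2 / (1 + c ^ 2 * s ^ 2 / 8) ^ 2) ‖y‖ := by
    intro y
    have h : Ufun c y = Real.log (c ^ 2 / (1 + c ^ 2 * ‖y‖ ^ 2 / 8) ^ 2) := by
      rw [Real.log_div (by positivity) (pow_ne_zero 2 (hpos _).ne'), Real.log_pow, Real.log_pow,
        Ufun]
      push_cast
      ring
    rw [h, Real.exp_log (div_pos (by positivity) (pow_pos (hpos _) 2))]
  simp_rw [hexp]
  rw [setIntegral_ball_radial (fun s : ℝ => c ^ 2 / (1 + c ^ 2 * s ^ 2 / 8) ^ 2) hR.le]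
  congr 1
  have hd : ∀ s : ℝ, HasDerivAt (fun s : ℝ => 4 * (c ^ 2 * s ^ 2 / 8) / (1 + c ^ 2 * s ^ 2 / 8))
      (s * (c ^ 2 / (1 + c ^ 2 * s ^ 2 / 8) ^ 2)) s := by
    intro s
    have h1 : HasDerivAt (fun s : ℝ => c ^ 2 * s ^ 2 / 8) (c ^ 2 * (2 * s) / 8) s := by
      simpa using ((hasDerivAt_pow 2 s).const_mul (c ^ 2)).div_const 8
    refine ((h1.const_mul 4).div (h1.const_add 1) (hpos s).ne').congr_deriv ?_
    have := (hpos s).ne'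
    field_simp
    ring
  rw [intervalIntegral.integral_eq_sub_of_hasDerivAt (fun s _ => hd s)]
  · simp
  · refine Continuous.intervalIntegrable ?_ _ _
    have : ∀ s : ℝ, (1 + c ^ 2 * s ^ 2 / 8) ^ 2 ≠ 0 := fun s => pow_ne_zero 2 (hpos s).ne'
    exact continuous_id.mul (continuous_const.div (by fun_prop) this)

/-- Let `R > 0`, `b > 0`, and let `g : [0,R] → ℝ` be Lipschitz, strictly
decreasing, with `g 0 = 2 log b = U_b(0)`.  Set `ψ(y) = g(|y|)` and assume that for a.e.
`r ∈ (0,R)`, `2πr·|g'(r)| ≤ ∫_{B_r} e^ψ dy`.  Then for every `0 < b' < b`,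
`∫_{B_R} e^ψ dy > ∫_{B_R} e^(U_{b'}) dy`. -/
theorem radial_comparison_strict (R b : ℝ) (hR : 0 < R) (hb : 0 < b) (g : ℝ → ℝ)
    (hLip : ∃ L : NNReal, LipschitzOnWith L g (Set.Icc 0 R))
    (hanti : StrictAntiOn g (Set.Icc 0 R))
    (hg0 : g 0 = 2 * Real.log b)
    (hsuper : ∀ᵐ r ∂(volume.restrict (Set.Ioo 0 R)),
      2 * π * r * |deriv g r| ≤
        ∫ y in Metric.ball (0 : EuclideanSpace ℝ (Fin 2)) r, Real.exp (g ‖y‖)) :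
    ∀ b' : ℝ, 0 < b' → b' < b →
      (∫ y in Metric.ball (0 : EuclideanSpace ℝ (Fin 2)) R, Real.exp (g ‖y‖)) >
        ∫ y in Metric.ball (0 : EuclideanSpace ℝ (Fin 2)) R, Real.exp (Ufun b' y) := by
  intro c hc hcb
  obtain ⟨L, hL⟩ := hLip
  -- Only the values of `g` on `[0, R]` matter, so a globally Lipschitz extension may be used.
  obtain ⟨G, hGL, hgG⟩ := hL.extend_real
  have hmass : ∀ r ∈ Set.Icc 0 R,
      ∫ y in Metric.ball (0 : EuclideanSpace ℝ (Fin 2)) r, Real.exp (g ‖y‖) =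
        2 * π * radMass G r := by
    intro r hr
    rw [setIntegral_ball_radial (fun s => Real.exp (g s)) hr.1, radMass]
    congr 1
    refine intervalIntegral.integral_congr fun s hs => ?_
    rw [Set.uIcc_of_le hr.1] at hs
    simp only [hgG ⟨hs.1, hs.2.trans hr.2⟩]
  have hder : ∀ᵐ r, r ∈ Set.Ioo 0 R → r * |deriv G r| ≤ radMass G r := by
    rw [ae_restrict_iff' measurableSet_Ioo] at hsuper
    filter_upwards [hsuper] with r hr hrR
    have h := hr hrR
    rw [hmass r ⟨hrR.1.le, hrR.2.le⟩] at h
    have hdd : deriv g r = deriv G r := by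
      refine Filter.EventuallyEq.deriv_eq ?_
      filter_upwards [Icc_mem_nhds hrR.1 hrR.2] with s hs using hgG hs
    rw [hdd, mul_assoc (2 * π)] at h
    exact le_of_mul_le_mul_left h (by positivity)
  have hG0 : 2 * Real.log c < G 0 := by
    rw [← hgG ⟨le_rfl, hR.le⟩, hg0]
    linarith [Real.log_lt_log hc hcb]
  rw [hmass R ⟨hR.le, le_rfl⟩, integral_exp_Ufun hR hc]
  exact mul_lt_mul_of_pos_left (bubble_mass_lt hR hc hGL hG0 hder) (by positivity)
end
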